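/- Let k be a field of characteristic zero. Let ψ be the k-algebra homomorphism from the polynomial ring in nine variables T₁,…,T₉ to the ring of polynomial functions on pairs (x, y) of traceless 3×3 matrices over k, sending T₁,…,T₉ respectively to tr(x²), tr(xy), tr(y²), tr(x³), tr(x²y), tr(xy²), tr(y³), tr(x²y²) − tr(xyxy), and tr(x²y²xy) − tr(y²x²yx). Then the kernel of ψ is a principal ideal. -/

import Mathlib

/-!
The kernel `P` of `ψ` is prime, because the ring of functions on traceless pairs is a domain
(`tracelessIdeal_isPrime`). Writing `k[T₁,…,T₉] = R[T₉]` with `R = k[T₁,…,T₈]`, a prime of `R[T₉]`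
meeting the UFD `R` in zero is principal (`isPrincipal_of_prime_of_C`), so the explicit relation is
never needed: it is enough that the first eight invariants are algebraically independent
(`eq_zero_of_rename_mem`). For this, pass to the algebraic closure `K` of `k`: with `x` diagonal one
can solve for a pair `(x, y)` having any prescribed values of the eight invariants for which the
polynomial `T₁³ - 6 T₄²`, twice the discriminant of `x`, is nonzero (`exists_pair`). A relation among them thus vanishes on a
nonempty Zariski open subset of `K⁸`, hence is zero.
-/

open Matrix MvPolynomial

/-- The generic pair of 3×3 matrices: `genM 0` and `genM 1` have as entries the variables
`X (0, r, c)` and `X (1, r, c)` respectively. -/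
noncomputable def genM {k : Type*} [Field k] (i : Fin 2) :
    Matrix (Fin 3) (Fin 3) (MvPolynomial (Fin 2 × Fin 3 × Fin 3) k) :=
  Matrix.of fun r c => MvPolynomial.X (i, r, c)

/-- The ideal cutting out the pairs of traceless 3×3 matrices, generated by the traces of
the two generic matrices; the quotient is the ring of polynomial functions on pairs
of traceless 3×3 matrices. -/
noncomputable def tracelessIdeal (k : Type*) [Field k] :
    Ideal (MvPolynomial (Fin 2 × Fin 3 × Fin 3) k) :=
  Ideal.span {Matrix.trace (genM (k := k) 0), Matrix.trace (genM (k := k) 1)}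

/-- The nine generating invariants `tr(x²)`, `tr(xy)`, `tr(y²)`, `tr(x³)`, `tr(x²y)`,
`tr(xy²)`, `tr(y³)`, `tr(x²y²) - tr(xyxy)`, `tr(x²y²xy) - tr(y²x²yx)` of the generic pair
`(x, y) = (genM 0, genM 1)`. -/
noncomputable def nineInvariants {k : Type*} [Field k] :
    Fin 9 → MvPolynomial (Fin 2 × Fin 3 × Fin 3) k :=
  let x := genM (k := k) 0
  let y := genM (k := k) 1
  ![Matrix.trace (x * x), Matrix.trace (x * y), Matrix.trace (y * y),
    Matrix.trace (x * x * x), Matrix.trace (x * x * y), Matrix.trace (x * y * y),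
    Matrix.trace (y * y * y),
    Matrix.trace (x * x * y * y) - Matrix.trace (x * y * x * y),
    Matrix.trace (x * x * y * y * x * y) - Matrix.trace (y * y * x * x * y * x)]

/-- A prime ideal `P` of `R[X]` with `P ∩ R = 0`, `R` a UFD, is principal. A prime element `f ∈ P`
remains irreducible over `Frac R`; if some `g ∈ P` were not a multiple of `f`, a Bézout relation
over `Frac R` would, after clearing denominators, put a nonzero constant into `P`. -/
theorem isPrincipal_of_prime_of_C {R : Type*} [CommRing R] [IsDomain R]
    [UniqueFactorizationMonoid R] (P : Ideal (Polynomial R)) [hP : P.IsPrime]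
    (h : ∀ r : R, Polynomial.C r ∈ P → r = 0) : P.IsPrincipal := by
  classical
  by_cases hbot : P = ⊥
  · rw [hbot]; exact bot_isPrincipal
  obtain ⟨f, hfP, hf⟩ := Ideal.IsPrime.exists_mem_prime_of_ne_bot hP hbot
  have hdeg : f.natDegree ≠ 0 := by
    intro h0
    rw [Polynomial.eq_C_of_natDegree_eq_zero h0] at hfP
    have := h _ hfP
    rw [Polynomial.eq_C_of_natDegree_eq_zero h0, this, Polynomial.C_0] at hf
    exact hf.ne_zero rfl
  let _ : NormalizedGCDMonoid R := Classical.choice inferInstance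
  have hprim : f.IsPrimitive := hf.irreducible.isPrimitive hdeg
  let K := FractionRing R
  have hirr : Irreducible (f.map (algebraMap R K)) :=
    (hprim.irreducible_iff_irreducible_map_fraction_map (K := K)).1 hf.irreducible
  refine ⟨⟨f, ?_⟩⟩
  apply le_antisymm
  · intro g hg
    rw [Ideal.submodule_span_eq, Ideal.mem_span_singleton]
    by_contra hfg
    -- If `f ∣ g` over `Frac R`, then `f ∣ c * g` over `R`, and the prime `f` does not divide `c`.
    have hndvd : ¬ f.map (algebraMap R K) ∣ g.map (algebraMap R K) := by
      intro hd
      obtain ⟨q, hq⟩ := hd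
      obtain ⟨c, hc, hc'⟩ := IsLocalization.integerNormalization_spec
        (nonZeroDivisors R) q
      set q' := IsLocalization.integerNormalization (nonZeroDivisors R) q
      have e : f * q' = Polynomial.C c * g := by
        apply Polynomial.map_injective _ (IsFractionRing.injective R K)
        rw [Polynomial.map_mul, Polynomial.map_mul, hq, hc', Polynomial.map_C]
        simp only [Algebra.smul_def, Polynomial.algebraMap_apply]
        ring
      rcases hf.dvd_or_dvd (Dvd.intro _ e) with hd | hd
      · obtain ⟨s, hs⟩ := hd
        have hc0 : c ≠ 0 := nonZeroDivisors.ne_zero hc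
        have := Polynomial.natDegree_C c
        rw [hs, Polynomial.natDegree_mul hf.ne_zero] at this
        · omega
        · rintro rfl
          rw [mul_zero, Polynomial.C_eq_zero] at hs
          exact hc0 hs
      · exact hfg hd
    obtain ⟨a, b, hab⟩ := (hirr.coprime_iff_not_dvd (n := g.map (algebraMap R K))).2 hndvd
    obtain ⟨c, hc, hc'⟩ := IsLocalization.integerNormalization_spec
      (nonZeroDivisors R) a
    obtain ⟨d, hd, hd'⟩ := IsLocalization.integerNormalization_spec
      (nonZeroDivisors R) b
    set a' := IsLocalization.integerNormalization (nonZeroDivisors R) a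
    set b' := IsLocalization.integerNormalization (nonZeroDivisors R) b
    have e : Polynomial.C d * a' * f + Polynomial.C c * b' * g = Polynomial.C (c * d) := by
      apply Polynomial.map_injective _ (IsFractionRing.injective R K)
      simp only [Polynomial.map_mul, Polynomial.map_add, hc', hd', Polynomial.map_C,
        Algebra.smul_def, Polynomial.algebraMap_apply, map_mul]
      linear_combination (Polynomial.C ((algebraMap R K) c) * Polynomial.C ((algebraMap R K) d)) *
        hab
    have hmem : Polynomial.C (c * d) ∈ P := by
      rw [← e]
      exact P.add_mem (P.mul_mem_left _ hfP) (P.mul_mem_left _ hg)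
    exact mul_ne_zero (nonZeroDivisors.ne_zero hc) (nonZeroDivisors.ne_zero hd) (h _ hmem)
  · rw [Ideal.submodule_span_eq, Ideal.span_singleton_le_iff_mem]
    exact hfP

/-- `tracelessIdeal k` is the kernel of the substitution `z₃₃ ↦ -z₁₁ - z₂₂`, an endomorphism of a
domain. -/
theorem tracelessIdeal_isPrime (k : Type*) [Field k] : (tracelessIdeal k).IsPrime := by
  let φ : MvPolynomial (Fin 2 × Fin 3 × Fin 3) k →ₐ[k] MvPolynomial (Fin 2 × Fin 3 × Fin 3) k :=
    aeval (fun v => if v.2 = (2, 2) then -X (v.1, 0, 0) - X (v.1, 1, 1) else X v)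
  have htr : ∀ i : Fin 2, Matrix.trace (genM (k := k) i) ∈ tracelessIdeal k := by
    intro i
    apply Ideal.subset_span
    fin_cases i <;> simp
  -- The substitution is the identity modulo the traceless ideal.
  have hcomp : (Ideal.Quotient.mkₐ k (tracelessIdeal k)).comp φ =
      Ideal.Quotient.mkₐ k (tracelessIdeal k) := by
    apply MvPolynomial.algHom_ext
    rintro ⟨i, j⟩
    simp only [φ, AlgHom.comp_apply, aeval_X]
    split_ifs with hj
    · subst hj
      simp only [Ideal.Quotient.mkₐ_eq_mk]
      rw [eq_comm, Ideal.Quotient.eq]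
      have := htr i
      simp only [Matrix.trace_fin_three, genM, Matrix.of_apply] at this
      convert this using 1
      ring
    · rfl
  have hker : tracelessIdeal k = RingHom.ker φ := by
    apply le_antisymm
    · rw [tracelessIdeal, Ideal.span_le]
      rintro p (rfl | rfl) <;>
        simp [φ, Matrix.trace_fin_three, genM]
    · intro p hp
      have h1 := DFunLike.congr_fun hcomp p
      rw [AlgHom.comp_apply, (RingHom.mem_ker).1 hp, map_zero] at h1
      exact Ideal.Quotient.eq_zero_iff_mem.1 h1.symm
  rw [hker]
  exact RingHom.ker_isPrime _

theorem exists_vandermonde {K : Type*} [Field K] {a b c : K} (hab : a ≠ b) (hac : a ≠ c)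
    (hbc : b ≠ c) (e₀ e₁ e₂ : K) : ∃ u v w : K, u + v + w = e₀ ∧
      a * u + b * v + c * w = e₁ ∧ a ^ 2 * u + b ^ 2 * v + c ^ 2 * w = e₂ := by
  have h1 := sub_ne_zero.2 hab
  have h2 := sub_ne_zero.2 hac
  have h3 := sub_ne_zero.2 hbc
  refine ⟨(e₂ - (b + c) * e₁ + b * c * e₀) / ((a - b) * (a - c)),
    -(e₂ - (a + c) * e₁ + a * c * e₀) / ((a - b) * (b - c)),
    (e₂ - (a + b) * e₁ + a * b * e₀) / ((a - c) * (b - c)), ?_, ?_, ?_⟩ <;>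
  · field_simp
    ring

/-- `u` and `v` are the roots of `X² - sX + m`. -/
theorem exists_add_mul {K : Type*} [Field K] [IsAlgClosed K] (s m : K) :
    ∃ u v : K, u + v = s ∧ u * v = m := by
  obtain ⟨u, hu⟩ := IsAlgClosed.exists_root
    (Polynomial.X ^ 2 - Polynomial.C s * Polynomial.X + Polynomial.C m : Polynomial K) (by
      have : (Polynomial.X ^ 2 - Polynomial.C s * Polynomial.X + Polynomial.C m :
        Polynomial K).degree = 2 := by compute_degree!
      rw [this]; decide)
  refine ⟨u, s - u, by ring, ?_⟩
  simp [Polynomial.IsRoot] at hu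
  linear_combination -hu

/-- The eigenvalues `a, b, c` are the roots of `X³ - (t₁/2) X - t₄/3`. -/
theorem exists_diag {K : Type*} [Field K] [CharZero K] [IsAlgClosed K] (t₁ t₄ : K) :
    ∃ a b c : K, a + b + c = 0 ∧ a ^ 2 + b ^ 2 + c ^ 2 = t₁ ∧ a ^ 3 + b ^ 3 + c ^ 3 = t₄ := by
  obtain ⟨a, ha⟩ := IsAlgClosed.exists_root
    (Polynomial.X ^ 3 - Polynomial.C (t₁ / 2) * Polynomial.X - Polynomial.C (t₄ / 3) :
      Polynomial K) (by
      have : (Polynomial.X ^ 3 - Polynomial.C (t₁ / 2) * Polynomial.X - Polynomial.C (t₄ / 3) :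
        Polynomial K).degree = 3 := by compute_degree!
      rw [this]; decide)
  obtain ⟨b, c, h1, h2⟩ := exists_add_mul (-a) (a ^ 2 - t₁ / 2)
  simp [Polynomial.IsRoot] at ha
  refine ⟨a, b, c, by linear_combination h1, ?_, ?_⟩
  · linear_combination (b + c - a) * h1 - 2 * h2
  · have hc : c = -a - b := by linear_combination h1
    subst hc
    linear_combination 3 * ha + 3 * a * h2

/-- The off-diagonal entries of a 3×3 matrix can be chosen with prescribed products over
2-cycles and prescribed sum of the two 3-cycle products `u`, `v`: necessarily `uv = pqr`, so
`u` and `v` are found from a quadratic. -/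
theorem exists_offdiag {K : Type*} [Field K] [IsAlgClosed K] (p q r s : K) :
    ∃ y₁₂ y₂₁ y₁₃ y₃₁ y₂₃ y₃₂ : K, y₁₂ * y₂₁ = p ∧ y₁₃ * y₃₁ = q ∧ y₂₃ * y₃₂ = r ∧
      y₁₂ * y₂₃ * y₃₁ + y₁₃ * y₃₂ * y₂₁ = s := by
  obtain ⟨u, v, h1, h2⟩ := exists_add_mul s (p * q * r)
  by_cases hu : u = 0
  · by_cases hv : v = 0
    · subst hu hv
      have h0 : p * q * r = 0 := by rw [← h2, zero_mul]
      have hs : s = 0 := by rw [← h1, zero_add]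
      subst hs
      rcases mul_eq_zero.1 h0 with h0 | rfl
      · rcases mul_eq_zero.1 h0 with rfl | rfl
        · exact ⟨0, 0, 1, q, 1, r, by simp⟩
        · exact ⟨1, p, 0, 0, 1, r, by simp⟩
      · exact ⟨1, p, 1, q, 0, 0, by simp⟩
    · refine ⟨p, 1, v, q / v, r, 1, by ring, by field_simp, by ring, ?_⟩
      field_simp
      linear_combination v * h1 - h2
  · refine ⟨1, p, q / u, u, 1, r, by ring, by field_simp, by ring, ?_⟩
    field_simp
    linear_combination u * h1 - h2

/-- Over an algebraically closed field the first eight invariants take every value off the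
discriminant locus `t₁³ = 6 t₄²`, already with `x` diagonal. For `x = diag(a, b, c)` with distinct
eigenvalues, the diagonal of `y` and the 2-cycle products `y_ij y_ji` each solve a Vandermonde
system. -/
theorem exists_pair {K : Type*} [Field K] [CharZero K] [IsAlgClosed K] (t : Fin 8 → K)
    (ht : t 0 ^ 3 - 6 * t 3 ^ 2 ≠ 0) :
    ∃ x y : Matrix (Fin 3) (Fin 3) K, x.trace = 0 ∧ y.trace = 0 ∧
      Matrix.trace (x * x) = t 0 ∧ Matrix.trace (x * y) = t 1 ∧ Matrix.trace (y * y) = t 2 ∧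
      Matrix.trace (x * x * x) = t 3 ∧ Matrix.trace (x * x * y) = t 4 ∧
      Matrix.trace (x * y * y) = t 5 ∧ Matrix.trace (y * y * y) = t 6 ∧
      Matrix.trace (x * x * y * y) - Matrix.trace (x * y * x * y) = t 7 := by
  obtain ⟨a, b, c, h0, h1, h2⟩ := exists_diag (t 0) (t 3)
  have hc : c = -a - b := by linear_combination h0
  -- The right-hand side is twice the discriminant of the characteristic polynomial of `x`.
  have hdisc : t 0 ^ 3 - 6 * t 3 ^ 2 = 2 * ((a - b) * (a - c) * (b - c)) ^ 2 := by
    rw [← h1, ← h2, hc]; ring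
  rw [hdisc] at ht
  have hab : a ≠ b := by rintro rfl; simp at ht
  have hac : a ≠ c := by rintro rfl; simp at ht
  have hbc : b ≠ c := by rintro rfl; simp at ht
  obtain ⟨d₁, d₂, d₃, hd0, hd1, hd2⟩ := exists_vandermonde hab hac hbc 0 (t 1) (t 4)
  -- With `p = y₁₂y₂₁`, `q = y₁₃y₃₁`, `r = y₂₃y₃₂`: the coefficient of `p` in `tr(xy²)` is
  -- `a + b = -c` and in `tr(x²y²) - tr(xyxy)` it is `(a - b)² = 2 t₁ - 3 c²`, and similarly for
  -- `q` and `r`. So prescribing `t₃, t₆, t₈` is a Vandermonde system with nodes `a, b, c` paired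
  -- with `r, q, p`.
  obtain ⟨r, q, p, hp0, hp1, hp2⟩ := exists_vandermonde hab hac hbc
    ((t 2 - (d₁ ^ 2 + d₂ ^ 2 + d₃ ^ 2)) / 2)
    (a * d₁ ^ 2 + b * d₂ ^ 2 + c * d₃ ^ 2 - t 5)
    ((2 * t 0 * ((t 2 - (d₁ ^ 2 + d₂ ^ 2 + d₃ ^ 2)) / 2) - t 7) / 3)
  obtain ⟨y₁₂, y₂₁, y₁₃, y₃₁, y₂₃, y₃₂, hp, hq, hr, hs⟩ := exists_offdiag p q r
    ((t 6 - (d₁ ^ 3 + d₂ ^ 3 + d₃ ^ 3) - 3 * ((d₁ + d₂) * p + (d₁ + d₃) * q + (d₂ + d₃) * r)) / 3)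
  refine ⟨!![a, 0, 0; 0, b, 0; 0, 0, c], !![d₁, y₁₂, y₁₃; y₂₁, d₂, y₂₃; y₃₁, y₃₂, d₃],
    ?_, ?_, ?_, ?_, ?_, ?_, ?_, ?_, ?_, ?_⟩ <;>
    simp only [Matrix.trace_fin_three, Matrix.mul_apply, Fin.sum_univ_three, Matrix.of_apply,
      Matrix.cons_val_zero, Matrix.cons_val_one, Matrix.cons_val, zero_mul, mul_zero, add_zero,
      zero_add]
  · exact h0
  · exact hd0
  · linear_combination h1
  · linear_combination hd1
  · linear_combination 2 * hp0 + 2 * hp + 2 * hq + 2 * hr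
  · linear_combination h2
  · linear_combination hd2
  · subst hp hq hr
    linear_combination -hp1 + (y₁₂ * y₂₁ + y₁₃ * y₃₁ + y₂₃ * y₃₂) * h0
  · subst hp hq hr
    linear_combination 3 * hs
  · subst hp hq hr
    rw [← h1] at hp2
    subst hc
    linear_combination (-3) * hp2 + 2 * (a ^ 2 + b ^ 2 + (-a - b) ^ 2) * hp0

/-- The first eight invariants are algebraically independent on traceless pairs: a relation
between them vanishes on a nonempty Zariski open set of values. -/
theorem eq_zero_of_rename_mem {k : Type*} [Field k] [CharZero k] (r : MvPolynomial (Fin 8) k)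
    (hr : aeval (nineInvariants (k := k)) (rename Fin.castSucc r) ∈ tracelessIdeal k) :
    r = 0 := by
  let K := AlgebraicClosure k
  have hK : CharZero K := charZero_of_injective_algebraMap (algebraMap k K).injective
  have key : ∀ t : Fin 8 → K, t 0 ^ 3 - 6 * t 3 ^ 2 ≠ 0 → aeval t r = 0 := by
    intro t ht
    obtain ⟨x, y, hx, hy, h0, h1, h2, h3, h4, h5, h6, h7⟩ := exists_pair t ht
    let ev : MvPolynomial (Fin 2 × Fin 3 × Fin 3) k →ₐ[k] K :=
      aeval (fun v => (![x, y] v.1) v.2.1 v.2.2)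
    have hgx : (genM (k := k) 0).map ev = x := by
      ext i j; simp [genM, ev]
    have hgy : (genM (k := k) 1).map ev = y := by
      ext i j; simp [genM, ev]
    have htr : ∀ M : Matrix (Fin 3) (Fin 3) (MvPolynomial (Fin 2 × Fin 3 × Fin 3) k),
        ev M.trace = (M.map ev).trace := fun M => AddMonoidHom.map_trace ev M
    have hev : tracelessIdeal k ≤ RingHom.ker ev := by
      rw [tracelessIdeal, Ideal.span_le]
      rintro p (rfl | rfl)
      · simp only [SetLike.mem_coe, RingHom.mem_ker, htr, hgx, hx]
      · simp only [SetLike.mem_coe, RingHom.mem_ker, htr, hgy, hy]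
    have hz := RingHom.mem_ker.1 (hev hr)
    rw [aeval_rename, ← AlgHom.comp_apply, comp_aeval] at hz
    convert hz using 3
    ext i
    fin_cases i <;>
      simp [nineInvariants, htr, Matrix.map_mul, hgx, hgy, h0, h1, h2, h3, h4, h5, h6, h7]
  -- Multiplying by `T₁³ - 6 T₄²` gives a polynomial vanishing at every point of `K⁸`.
  have hprod : map (algebraMap k K) r * (X 0 ^ 3 - 6 * X 3 ^ 2) = 0 := by
    apply MvPolynomial.funext
    intro t
    by_cases ht : t 0 ^ 3 - 6 * t 3 ^ 2 = 0
    · simp [ht]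
    · have := key t ht
      rw [aeval_def, ← eval_map] at this
      simp [this]
  have hne : (X 0 ^ 3 - 6 * X 3 ^ 2 : MvPolynomial (Fin 8) K) ≠ 0 := by
    intro h
    have := congrArg (eval (fun i : Fin 8 => if i = 0 then (1 : K) else 0)) h
    simp at this
  rcases mul_eq_zero.1 hprod with h | h
  · exact map_injective _ (algebraMap k K).injective (by rw [h, map_zero])
  · exact absurd h hne

/-- The kernel of the k-algebra map `ψ : k[T₁,…,T₉] →` (polynomial functions on pairs of
traceless 3×3 matrices), sending `T₁,…,T₉` to the nine generating invariants, is a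
principal ideal. -/
theorem stmt_15 {k : Type*} [Field k] [CharZero k] :
    (RingHom.ker (MvPolynomial.aeval
        (fun i : Fin 9 =>
          Ideal.Quotient.mk (tracelessIdeal k) (nineInvariants (k := k) i)) :
        MvPolynomial (Fin 9) k →ₐ[k]
          MvPolynomial (Fin 2 × Fin 3 × Fin 3) k ⧸ tracelessIdeal k).toRingHom).IsPrincipal := by
  have hprime := tracelessIdeal_isPrime k
  set ψ := (MvPolynomial.aeval
        (fun i : Fin 9 =>
          Ideal.Quotient.mk (tracelessIdeal k) (nineInvariants (k := k) i)) :
        MvPolynomial (Fin 9) k →ₐ[k]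
          MvPolynomial (Fin 2 × Fin 3 × Fin 3) k ⧸ tracelessIdeal k) with hψ
  have hψ' : ψ = (Ideal.Quotient.mkₐ k (tracelessIdeal k)).comp (aeval nineInvariants) := by
    rw [hψ, comp_aeval]; rfl
  -- `k[T₁,…,T₉]` viewed as `R[T₉]` with `R = k[T₁,…,T₈]`.
  let e : MvPolynomial (Fin 9) k ≃ₐ[k] Polynomial (MvPolynomial (Fin 8) k) :=
    (renameEquiv k finSuccEquivLast).trans (optionEquivLeft k (Fin 8))
  have heC : ∀ r, e.symm (Polynomial.C r) = rename Fin.castSucc r := by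
    intro r
    rw [AlgEquiv.symm_apply_eq]
    simp only [e, AlgEquiv.trans_apply, renameEquiv_apply, rename_rename]
    have : (⇑finSuccEquivLast ∘ Fin.castSucc : Fin 8 → Option (Fin 8)) = some := by
      ext1 i; simp
    rw [this]
    induction r using MvPolynomial.induction_on with
    | C a => simp [optionEquivLeft_C]
    | add p q hp hq => simp only [map_add, hp, hq]
    | mul_X p i hp => simp only [map_mul, ← hp, rename_X, optionEquivLeft_X_some]
  have hprincipal : (RingHom.ker (ψ.toRingHom.comp e.symm.toAlgHom.toRingHom)).IsPrincipal := by
    have := RingHom.ker_isPrime (ψ.toRingHom.comp e.symm.toAlgHom.toRingHom)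
    apply isPrincipal_of_prime_of_C
    intro r hr
    apply eq_zero_of_rename_mem
    have h1 : ψ (e.symm (Polynomial.C r)) = 0 := hr
    rw [heC, hψ', AlgHom.comp_apply] at h1
    exact Ideal.Quotient.eq_zero_iff_mem.1 h1
  obtain ⟨⟨f, hf⟩⟩ := hprincipal
  refine ⟨⟨e.symm f, ?_⟩⟩
  ext p
  have hp : p ∈ RingHom.ker ψ.toRingHom ↔
      e p ∈ RingHom.ker (ψ.toRingHom.comp e.symm.toAlgHom.toRingHom) := by
    simp [RingHom.mem_ker]
  rw [hp, hf, Ideal.submodule_span_eq, Ideal.submodule_span_eq, Ideal.mem_span_singleton,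
    Ideal.mem_span_singleton]
  constructor
  · intro h
    simpa using map_dvd e.symm h
  · intro h
    simpa using map_dvd e h
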